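/- Let p, r ∈ k be nonzero and let f(u,v) = p·u³ + r·v³. If there exists λ ∈ k with λ³ = p/r, then the stabilizer of f in GL₂(k) under the action by linear substitution of variables is exactly the set {diag(ω^i, ω^j) : 0 ≤ i, j ≤ 2} ∪ {antidiagonal matrices [[0, ω^i·λ⁻¹],[ω^j·λ, 0]] : 0 ≤ i, j ≤ 2}; in particular it is a group of order 18 isomorphic to (Z/3Z × Z/3Z) ⋊ Z/2Z. -/

import Mathlib

noncomputable section

open MvPolynomial

/-- The binary cubic form a₀u³ + a₁u²v + a₂uv² + a₃v³ as a polynomial in u = X 0, v = X 1. -/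
def cubicForm (k : Type*) [Field k] (a₀ a₁ a₂ a₃ : k) : MvPolynomial (Fin 2) k :=
  C a₀ * X 0 ^ 3 + C a₁ * X 0 ^ 2 * X 1 + C a₂ * X 0 * X 1 ^ 2 + C a₃ * X 1 ^ 3

/-- The discriminant of the binary cubic form a₀u³ + a₁u²v + a₂uv² + a₃v³. -/
def cubicDisc (k : Type*) [Field k] (a₀ a₁ a₂ a₃ : k) : k :=
  -27 * a₀ ^ 2 * a₃ ^ 2 + a₁ ^ 2 * a₂ ^ 2 + 18 * a₀ * a₁ * a₂ * a₃ -
    4 * a₀ * a₂ ^ 3 - 4 * a₁ ^ 3 * a₃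

/-- The action of `GL₂(k)` on binary cubic forms by linear substitution of the variables:
for `M = [[a,b],[c,d]]`, `(M·f)(u,v) = f(au + bv, cu + dv)`. -/
def glAct (k : Type*) [Field k] (M : GL (Fin 2) k) (p : MvPolynomial (Fin 2) k) :
    MvPolynomial (Fin 2) k :=
  aeval (fun i : Fin 2 =>
    C ((M : Matrix (Fin 2) (Fin 2) k) i 0) * X 0 +
      C ((M : Matrix (Fin 2) (Fin 2) k) i 1) * X 1) p

end

/-!
Write `M = [[a, b], [c, d]]` and `f = p u³ + r v³`. If `M` fixes `f`, then the `u²v` and `uv²`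
coefficients `3 (p a² b + r c² d)` and `3 (p a b² + r c d²)` of `f(au + bv, cu + dv)` vanish;
eliminating between the two equations gives `p (det M) ab = 0` and `r (det M) cd = 0`, so `M` is
diagonal or antidiagonal. The `u³` and `v³` coefficients then only constrain the cubes of the two
nonzero entries, each of which is therefore determined up to a power of `ω`.
-/

section Coefficients

variable {k : Type*} [Field k]

-- Dehomogenising at `v = 1` recovers the coefficients over every field, whereas evaluation at
-- points does not over small ones.
theorem aeval_X_one_cubicForm (a₀ a₁ a₂ a₃ : k) :
    MvPolynomial.aeval ![(Polynomial.X : Polynomial k), 1] (cubicForm k a₀ a₁ a₂ a₃) =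
      Cubic.toPoly ⟨a₀, a₁, a₂, a₃⟩ := by
  simp [cubicForm, Cubic.toPoly, Polynomial.C_eq_algebraMap]

theorem cubicForm_inj {a₀ a₁ a₂ a₃ b₀ b₁ b₂ b₃ : k} :
    cubicForm k a₀ a₁ a₂ a₃ = cubicForm k b₀ b₁ b₂ b₃ ↔
      a₀ = b₀ ∧ a₁ = b₁ ∧ a₂ = b₂ ∧ a₃ = b₃ := by
  refine ⟨fun h ↦ ?_, by rintro ⟨rfl, rfl, rfl, rfl⟩; rfl⟩
  have hpoly := congrArg (MvPolynomial.aeval ![(Polynomial.X : Polynomial k), 1]) h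
  rw [aeval_X_one_cubicForm, aeval_X_one_cubicForm] at hpoly
  exact Cubic.mk.inj ((Cubic.toPoly_injective _ _).1 hpoly)

theorem glAct_cubicForm (M : GL (Fin 2) k) (a₀ a₁ a₂ a₃ : k) :
    glAct k M (cubicForm k a₀ a₁ a₂ a₃) =
      cubicForm k
        (a₀ * M 0 0 ^ 3 + a₁ * M 0 0 ^ 2 * M 1 0 + a₂ * M 0 0 * M 1 0 ^ 2 + a₃ * M 1 0 ^ 3)
        (3 * a₀ * M 0 0 ^ 2 * M 0 1 + a₁ * (M 0 0 ^ 2 * M 1 1 + 2 * M 0 0 * M 0 1 * M 1 0) +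
          a₂ * (M 0 1 * M 1 0 ^ 2 + 2 * M 0 0 * M 1 0 * M 1 1) + 3 * a₃ * M 1 0 ^ 2 * M 1 1)
        (3 * a₀ * M 0 0 * M 0 1 ^ 2 + a₁ * (M 0 1 ^ 2 * M 1 0 + 2 * M 0 0 * M 0 1 * M 1 1) +
          a₂ * (M 0 0 * M 1 1 ^ 2 + 2 * M 0 1 * M 1 0 * M 1 1) + 3 * a₃ * M 1 0 * M 1 1 ^ 2)
        (a₀ * M 0 1 ^ 3 + a₁ * M 0 1 ^ 2 * M 1 1 + a₂ * M 0 1 * M 1 1 ^ 2 + a₃ * M 1 1 ^ 3) := by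
  simp only [glAct, cubicForm, map_add, map_mul, map_pow, MvPolynomial.algHom_C,
    MvPolynomial.algebraMap_eq, MvPolynomial.aeval_X, map_ofNat MvPolynomial.C]
  ring

end Coefficients

theorem diagonal_or_antidiagonal_of_mixed_eq_zero {R : Type*} [CommRing R] [NoZeroDivisors R]
    {p r a b c d : R} (hp : p ≠ 0) (hr : r ≠ 0) (hdet : a * d - b * c ≠ 0)
    (huuv : p * a ^ 2 * b + r * c ^ 2 * d = 0) (huvv : p * a * b ^ 2 + r * c * d ^ 2 = 0) :
    (b = 0 ∧ c = 0) ∨ (a = 0 ∧ d = 0) := by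
  have hab : a * b = 0 := by
    refine (mul_eq_zero.1 ?_).resolve_left (mul_ne_zero hp hdet)
    linear_combination d * huuv - c * huvv
  have hcd : c * d = 0 := by
    refine (mul_eq_zero.1 ?_).resolve_left (mul_ne_zero hr hdet)
    linear_combination a * huvv - b * huuv
  rcases mul_eq_zero.1 hab with rfl | rfl
  · have hc : c ≠ 0 := by rintro rfl; simp at hdet
    exact .inr ⟨rfl, (mul_eq_zero.1 hcd).resolve_left hc⟩
  · have hd : d ≠ 0 := by rintro rfl; simp at hdet
    exact .inl ⟨rfl, (mul_eq_zero.1 hcd).resolve_right hd⟩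

theorem glAct_cubicForm_eq_self_iff {k : Type*} [Field k] (h3 : (3 : k) ≠ 0) {p r : k}
    (hp : p ≠ 0) (hr : r ≠ 0) (M : GL (Fin 2) k) :
    glAct k M (cubicForm k p 0 0 r) = cubicForm k p 0 0 r ↔
      (M 0 1 = 0 ∧ M 1 0 = 0 ∧ M 0 0 ^ 3 = 1 ∧ M 1 1 ^ 3 = 1) ∨
      (M 0 0 = 0 ∧ M 1 1 = 0 ∧ M 0 1 ^ 3 = r / p ∧ M 1 0 ^ 3 = p / r) := by
  rw [glAct_cubicForm, cubicForm_inj]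
  constructor
  · rintro ⟨huuu, huuv, huvv, hvvv⟩
    have hdet : M 0 0 * M 1 1 - M 0 1 * M 1 0 ≠ 0 := by
      simpa only [Matrix.det_fin_two] using M.det_ne_zero
    have hshape := diagonal_or_antidiagonal_of_mixed_eq_zero hp hr hdet
      (mul_left_cancel₀ h3 (by linear_combination huuv))
      (mul_left_cancel₀ h3 (by linear_combination huvv))
    rcases hshape with ⟨hb, hc⟩ | ⟨ha, hd⟩
    · exact .inl ⟨hb, hc, by simpa [hc, hp] using huuu, by simpa [hb, hr] using hvvv⟩
    · refine .inr ⟨ha, hd, ?_, ?_⟩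
      · simpa [hd, eq_div_iff hp, mul_comm] using hvvv
      · simpa [ha, eq_div_iff hr, mul_comm] using huuu
  · rintro (⟨hb, hc, ha, hd⟩ | ⟨ha, hd, hb, hc⟩)
    · simp [ha, hb, hc, hd]
    · simp [ha, hb, hc, hd, mul_div_cancel₀, hp, hr]

section RootsOfUnity

variable {R : Type*} [CommRing R] {n : ℕ} {ω x y : R}

theorem pow_eq_pow_iff_exists_eq_pow_mul [IsDomain R] [NeZero n] (hω : IsPrimitiveRoot ω n) :
    x ^ n = y ^ n ↔ ∃ i : Fin n, x = ω ^ (i : ℕ) * y := by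
  rw [← Polynomial.mem_nthRoots (NeZero.pos n), hω.nthRoots_eq rfl]
  simp [Fin.exists_iff, eq_comm]

theorem ncard_setOf_val_mem_range {M ι : Type*} [Monoid M] {F : ι → M}
    (hF : Function.Injective F) (hunit : ∀ i, IsUnit (F i)) :
    {u : Mˣ | ↑u ∈ Set.range F}.ncard = Nat.card ι := by
  have himage : Units.val '' {u : Mˣ | ↑u ∈ Set.range F} = Set.range F :=
    Set.image_preimage_eq_of_subset (by rintro _ ⟨i, rfl⟩; exact hunit i)
  rw [← Set.ncard_image_of_injective _ Units.val_injective, himage,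
    Set.ncard_range_of_injective hF]

/-- The diagonal matrices with entries `ω ^ i`, `ω ^ j` (left summand) and the antidiagonal
matrices with entries `ω ^ i * x`, `ω ^ j * y` (right summand), where `i, j < n`. Indexing by a
disjoint sum turns the count of these matrices into injectivity. -/
def rootMonomialMatrix (n : ℕ) (ω x y : R) :
    (Fin n × Fin n) ⊕ (Fin n × Fin n) → Matrix (Fin 2) (Fin 2) R :=
  Sum.elim (fun i ↦ !![ω ^ (i.1 : ℕ), 0; 0, ω ^ (i.2 : ℕ)])
    (fun i ↦ !![0, ω ^ (i.1 : ℕ) * x; ω ^ (i.2 : ℕ) * y, 0])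

theorem isUnit_rootMonomialMatrix (hω : IsUnit ω) (hx : IsUnit x) (hy : IsUnit y)
    (i : (Fin n × Fin n) ⊕ (Fin n × Fin n)) :
    IsUnit (rootMonomialMatrix n ω x y i) := by
  rw [Matrix.isUnit_iff_isUnit_det]
  rcases i with ⟨i, j⟩ | ⟨i, j⟩ <;> simp [rootMonomialMatrix, hω.pow, hx, hy]

theorem rootMonomialMatrix_injective [IsDomain R] (hω : IsPrimitiveRoot ω n) (hx : x ≠ 0)
    (hy : y ≠ 0) :
    Function.Injective (rootMonomialMatrix n ω x y) := by
  have hpow : Function.Injective fun i : Fin n ↦ ω ^ (i : ℕ) :=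
    fun i j h ↦ Fin.ext (hω.pow_inj i.isLt j.isLt h)
  refine Function.Injective.sumElim ?diagonal ?antidiagonal ?disjoint
  case diagonal =>
    rintro ⟨i, j⟩ ⟨i', j'⟩ h
    exact Prod.ext (hpow (congrFun₂ h 0 0)) (hpow (congrFun₂ h 1 1))
  case antidiagonal =>
    rintro ⟨i, j⟩ ⟨i', j'⟩ h
    exact Prod.ext (hpow (mul_right_cancel₀ hx (congrFun₂ h 0 1)))
      (hpow (mul_right_cancel₀ hy (congrFun₂ h 1 0)))
  case disjoint =>
    rintro ⟨i, j⟩ ⟨i', j'⟩ h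
    have hω0 : ω ≠ 0 := hω.ne_zero i.pos.ne'
    exact pow_ne_zero (i : ℕ) hω0 (congrFun₂ h 0 0)

theorem ncard_diagonal_or_antidiagonal [IsDomain R] [NeZero n] (hω : IsPrimitiveRoot ω n)
    (hx : IsUnit x) (hy : IsUnit y) :
    {M : GL (Fin 2) R |
      (∃ i j : Fin n, (M : Matrix (Fin 2) (Fin 2) R) =
        !![ω ^ (i : ℕ), 0; 0, ω ^ (j : ℕ)]) ∨
      (∃ i j : Fin n, (M : Matrix (Fin 2) (Fin 2) R) =
        !![0, ω ^ (i : ℕ) * x; ω ^ (j : ℕ) * y, 0])}.ncard = 2 * n ^ 2 := by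
  have hunit := isUnit_rootMonomialMatrix (n := n) (hω.isUnit (NeZero.ne n)) hx hy
  have hinj := rootMonomialMatrix_injective hω hx.ne_zero hy.ne_zero
  have hcard := ncard_setOf_val_mem_range hinj hunit
  simp only [Nat.card_eq_fintype_card, Fintype.card_sum, Fintype.card_prod, Fintype.card_fin,
    ← two_mul, ← sq] at hcard
  simpa only [rootMonomialMatrix, Set.mem_range, Sum.exists, Sum.elim_inl, Sum.elim_inr,
    Prod.exists, eq_comm] using hcard

end RootsOfUnity

theorem matrix_eq_fin_two_iff {α : Type*} {A : Matrix (Fin 2) (Fin 2) α} {a b c d : α} :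
    A = !![a, b; c, d] ↔ A 0 0 = a ∧ A 0 1 = b ∧ A 1 0 = c ∧ A 1 1 = d := by
  simp [← Matrix.ext_iff, Fin.forall_fin_two, and_assoc]

theorem setOf_glAct_cubicForm_eq_self {k : Type*} [Field k] {ω p r lam : k}
    (hω : IsPrimitiveRoot ω 3) (hp : p ≠ 0) (hr : r ≠ 0) (hlam : lam ^ 3 = p / r) :
    {M : GL (Fin 2) k | glAct k M (cubicForm k p 0 0 r) = cubicForm k p 0 0 r} =
      {M : GL (Fin 2) k |
        (∃ i j : Fin 3, (M : Matrix (Fin 2) (Fin 2) k) =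
          !![ω ^ (i : ℕ), 0; 0, ω ^ (j : ℕ)]) ∨
        (∃ i j : Fin 3, (M : Matrix (Fin 2) (Fin 2) k) =
          !![0, ω ^ (i : ℕ) * lam⁻¹; ω ^ (j : ℕ) * lam, 0])} := by
  have h3 : (3 : k) ≠ 0 := mod_cast hω.neZero'.ne
  have hlam_inv : lam⁻¹ ^ 3 = r / p := by rw [inv_pow, hlam, inv_div]
  have hroot (x y : k) := pow_eq_pow_iff_exists_eq_pow_mul hω (x := x) (y := y)
  have hunity (x : k) : x ^ 3 = 1 ↔ ∃ i : Fin 3, x = ω ^ (i : ℕ) := by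
    simpa only [one_pow, mul_one] using hroot x 1
  ext M
  simp only [Set.mem_ofPred_eq]
  rw [glAct_cubicForm_eq_self_iff h3 hp hr, ← hlam, ← hlam_inv, hunity, hunity, hroot, hroot]
  simp only [matrix_eq_fin_two_iff, exists_and_left, exists_and_right]
  tauto

theorem stmt17_general (k : Type*) [Field k] (ω : k) (hω : IsPrimitiveRoot ω 3)
    (p r : k) (hp : p ≠ 0) (hr : r ≠ 0)
    (lam : k) (hlam : lam ^ 3 = p / r) :
    {M : GL (Fin 2) k | glAct k M (cubicForm k p 0 0 r) = cubicForm k p 0 0 r} =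
        {M : GL (Fin 2) k |
          (∃ i j : Fin 3, (M : Matrix (Fin 2) (Fin 2) k) =
            !![ω ^ (i : ℕ), 0; 0, ω ^ (j : ℕ)]) ∨
          (∃ i j : Fin 3, (M : Matrix (Fin 2) (Fin 2) k) =
            !![0, ω ^ (i : ℕ) * lam⁻¹; ω ^ (j : ℕ) * lam, 0])} ∧
      {M : GL (Fin 2) k |
        glAct k M (cubicForm k p 0 0 r) = cubicForm k p 0 0 r}.ncard = 18 := by
  have hlam0 : lam ≠ 0 := by
    rintro rfl
    exact div_ne_zero hp hr (by simpa using hlam.symm)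
  have hstab := setOf_glAct_cubicForm_eq_self hω hp hr hlam
  refine ⟨hstab, ?_⟩
  rw [hstab, ncard_diagonal_or_antidiagonal hω (inv_ne_zero hlam0).isUnit hlam0.isUnit]
  norm_num

theorem stmt17 (k : Type*) [Field k] (h2 : (2 : k) ≠ 0) (h3 : (3 : k) ≠ 0)
    (ω : k) (hω : IsPrimitiveRoot ω 3)
    (p r : k) (hp : p ≠ 0) (hr : r ≠ 0)
    (lam : k) (hlam : lam ^ 3 = p / r) :
    {M : GL (Fin 2) k | glAct k M (cubicForm k p 0 0 r) = cubicForm k p 0 0 r} =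
        {M : GL (Fin 2) k |
          (∃ i j : Fin 3, (M : Matrix (Fin 2) (Fin 2) k) =
            !![ω ^ (i : ℕ), 0; 0, ω ^ (j : ℕ)]) ∨
          (∃ i j : Fin 3, (M : Matrix (Fin 2) (Fin 2) k) =
            !![0, ω ^ (i : ℕ) * lam⁻¹; ω ^ (j : ℕ) * lam, 0])} ∧
      {M : GL (Fin 2) k |
        glAct k M (cubicForm k p 0 0 r) = cubicForm k p 0 0 r}.ncard = 18 :=
  stmt17_general k ω hω p r hp hr lam hlam
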